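/- arXiv:2112.13684 — 4 statements merged into one kernel-verified Lean document; each statement's English description precedes it below -/
import Mathlib

section
/- Let d ≥ 1 be an integer and let γ be a d-core of length m. Then k^γ_j = l^γ_{j+1−m} for every j ∈ ℤ/dℤ, where the indices of the families (k^γ_j) and (l^γ_j) are taken modulo d. -/
/-!
With `m` beads, the bead of row `i` sits at `γ i + (m - i)`. Writing `n_j` for the number of
beads on runner `j`, two facts give the identity.

* For *every* partition, the right-hand side is `d * n_j + j`. Along row `i` the difference between
  the numbers of cells of residue `k` and of residue `k - 1` telescopes to
  `[i - γ i = k] - [i = k]` (`row_telescope`). For `k = m - j`, summing over the rows gives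
  `n_j - #{x < m : x ≡ j}` (`residue_sub`), and `d * #{x < m : x ≡ j} = m - j + ((j - m) mod d)`
  (`card_range_residue`).
* For a `d`-core, `n_0 = 0`. If `b` is a bead and `b - d ≥ 0` is not, then the row of `b` contains a
  cell with hook length `d` (`bead_sub_mem`); so from a bead divisible by `d` one could descend to a
  bead at `0`, which is impossible because all of the first `m` parts are positive.
-/

/-!
Partitions are encoded as functions `γ : ℕ → ℕ` with 1-based indexing:
`γ i` is the `i`-th part for `i ≥ 1` (the value `γ 0` is irrelevant).
-/

/-- The set of cells of the Young diagram of `γ` (1-based): the pair `(i, j)`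
(cell in row `j`, column `i`) is a cell when `1 ≤ j` and `1 ≤ i ≤ γ j`. -/
def cells (γ : ℕ → ℕ) : Set (ℕ × ℕ) :=
  {c | 1 ≤ c.2 ∧ 1 ≤ c.1 ∧ c.1 ≤ γ c.2}

/-- The hook length of `γ` at a cell `c = (i, j)`:
`#{(i',j') ∈ Y(γ) : i' ≥ i, j' ≥ j, (i'-i)(j'-j) = 0}`. -/
noncomputable def hook (γ : ℕ → ℕ) (c : ℕ × ℕ) : ℕ :=
  Set.ncard {c' | c' ∈ cells γ ∧ c.1 ≤ c'.1 ∧ c.2 ≤ c'.2 ∧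
    (c'.1 - c.1) * (c'.2 - c.2) = 0}

/-- `γ` is a partition of length `m`: it is weakly decreasing on indices `≥ 1`,
and its nonzero parts are exactly those with index `1 ≤ i ≤ m`. -/
def IsPartitionOfLength (γ : ℕ → ℕ) (m : ℕ) : Prop :=
  (∀ i, 1 ≤ i → γ (i + 1) ≤ γ i) ∧ (∀ i, 1 ≤ i → (γ i ≠ 0 ↔ i ≤ m))

/-- `γ` is a `d`-core: no cell of its Young diagram has hook length `d`. -/
def IsDCore (d : ℕ) (γ : ℕ → ℕ) : Prop :=
  ∀ c ∈ cells γ, hook γ c ≠ d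

/-- The `d`-residue count `ρ_k(γ) = #{(i,j) ∈ Y(γ) : j - i ≡ k (mod d)}`. -/
noncomputable def residue (d : ℕ) (γ : ℕ → ℕ) (k : ZMod d) : ℕ :=
  Set.ncard {c | c ∈ cells γ ∧ (c.2 : ZMod d) - (c.1 : ZMod d) = k}

/-- The `N`-bead set `B_N(γ) = {γ_i + N - i : 1 ≤ i ≤ N}`. -/
def beads (γ : ℕ → ℕ) (N : ℕ) : Set ℕ :=
  {b | ∃ i, 1 ≤ i ∧ i ≤ N ∧ b = γ i + (N - i)}

/-- `n_j(γ; N)`: the number of beads of `B_N(γ)` on the `j`-th runner of the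
`d`-abacus, i.e. beads congruent to `j` modulo `d`. -/
noncomputable def runnerCount (d : ℕ) (γ : ℕ → ℕ) (N j : ℕ) : ℕ :=
  Set.ncard {b | b ∈ beads γ N ∧ b % d = j}

/-- `b_j(γ) = n_j(γ) - n_0(γ)`, computed with the canonical choice `N = m`
(the length of `γ`), which satisfies `N ≥ m` and `N ≡ m (mod d)`. -/
noncomputable def bRunner (d : ℕ) (γ : ℕ → ℕ) (m j : ℕ) : ℤ :=
  (runnerCount d γ m j : ℤ) - (runnerCount d γ m 0 : ℤ)

/-- The family `k^γ_j = d·b_j(γ) + j`, indexed by `j ∈ ℤ/dℤ`. -/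
noncomputable def kFam (d : ℕ) (γ : ℕ → ℕ) (m : ℕ) (j : ZMod d) : ℤ :=
  (d : ℤ) * bRunner d γ m j.val + (j.val : ℤ)

/-- The family `l^γ_j = m + d(ρ_{1-j}(γ) - ρ_{-j}(γ)) + (j-1)`, indexed by
`j ∈ ℤ/dℤ`, where the last summand is the representative of `j - 1` in
`{0, …, d-1}` (so it is `j - 1` for `1 ≤ j ≤ d-1` and `d - 1` for `j = 0`). -/
noncomputable def lFam (d : ℕ) (γ : ℕ → ℕ) (m : ℕ) (j : ZMod d) : ℤ :=
  (m : ℤ) + (d : ℤ) * ((residue d γ (1 - j) : ℤ) - (residue d γ (-j) : ℤ))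
    + ((j - 1).val : ℤ)

open Finset

/-! ### Beads and hooks -/

lemma IsPartitionOfLength.anti {γ : ℕ → ℕ} {m : ℕ} (hγ : IsPartitionOfLength γ m)
    {i j : ℕ} (hi : 1 ≤ i) (hij : i ≤ j) : γ j ≤ γ i := by
  induction j, hij using Nat.le_induction with
  | base => exact le_rfl
  | succ k hk ih => exact (hγ.1 k (hi.trans hk)).trans ih

/-- If row `i` reaches column `c`, and column `c` has length exactly `r`, then the hook at
`(c, i)` is arm plus leg plus one. -/
lemma hook_eq {γ : ℕ → ℕ} {m : ℕ} (hγ : IsPartitionOfLength γ m) {c i r : ℕ} (hc : 1 ≤ c)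
    (hi : 1 ≤ i) (hir : i ≤ r) (hr : c ≤ γ r) (hr' : γ (r + 1) < c) :
    hook γ (c, i) = (γ i + 1 - c) + (r - i) := by
  have hset : {c' | c' ∈ cells γ ∧ (c, i).1 ≤ c'.1 ∧ (c, i).2 ≤ c'.2 ∧
      (c'.1 - (c, i).1) * (c'.2 - (c, i).2) = 0} =
      ((Icc c (γ i) ×ˢ {i} ∪ {c} ×ˢ Ioc i r : Finset (ℕ × ℕ)) : Set (ℕ × ℕ)) := by
    ext ⟨a, b⟩
    simp only [cells, Set.mem_ofPred_eq, mul_eq_zero, coe_union, coe_product, Set.mem_union,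
      Set.mem_prod, mem_coe, mem_Icc, mem_singleton, mem_Ioc]
    constructor
    · rintro ⟨⟨h1, h2, h3⟩, h4, h5, h6⟩
      by_cases hb : b = i
      · subst hb; exact Or.inl ⟨⟨h4, h3⟩, rfl⟩
      · right
        have hac : a = c := by omega
        subst hac
        refine ⟨rfl, by omega, ?_⟩
        by_contra hbr
        have := hγ.anti (i := r + 1) (j := b) (by omega) (by omega)
        omega
    · rintro (⟨⟨h1, h2⟩, rfl⟩ | ⟨rfl, h1, h2⟩)
      · refine ⟨⟨hi, by omega, h2⟩, h1, le_rfl, by omega⟩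
      · have := hγ.anti (i := b) (j := r) (by omega) h2
        refine ⟨⟨by omega, hc, by omega⟩, le_rfl, by omega, by omega⟩
  rw [hook, hset, Set.ncard_coe_finset, card_union_of_disjoint]
  · simp
  · rw [Finset.disjoint_left]
    rintro ⟨a, b⟩ h1 h2
    simp only [mem_product, mem_Icc, mem_singleton, mem_Ioc] at h1 h2
    omega

/-- In a `d`-core, sliding a bead down its runner by one position lands on another bead. -/
lemma bead_sub_mem {d : ℕ} (hd : 1 ≤ d) {γ : ℕ → ℕ} {m : ℕ} (hγ : IsPartitionOfLength γ m)
    (hcore : IsDCore d γ) {x : ℕ} (hb : x + d ∈ beads γ m) : x ∈ beads γ m := by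
  by_contra hx
  obtain ⟨i, hi, him, hbi⟩ := hb
  -- `r` is the last row whose bead lies beyond `x`; the hook of length `d` ends in row `r`.
  let P : ℕ → Prop := fun r => i ≤ r ∧ x < γ r + (m - r)
  have hPi : P i := ⟨le_rfl, by omega⟩
  obtain ⟨r, hrm, hPr, hmax⟩ : ∃ r, r ≤ m ∧ P r ∧ ∀ k, r < k → k ≤ m → ¬ P k :=
    ⟨Nat.findGreatest P m, Nat.findGreatest_le m, Nat.findGreatest_spec him hPi,
      fun k hk hkm => Nat.findGreatest_is_greatest hk hkm⟩
  obtain ⟨hir, hxr⟩ := hPr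
  have hnext : m ≤ x + r ∧ γ (r + 1) < x + r + 1 - m := by
    rcases hrm.lt_or_eq with hlt | rfl
    · have h1 : ¬ (i ≤ r + 1 ∧ x < γ (r + 1) + (m - (r + 1))) := hmax (r + 1) (by omega) hlt
      have h2 : x ≠ γ (r + 1) + (m - (r + 1)) := fun h => hx ⟨r + 1, by omega, hlt, h⟩
      omega
    · have : γ (r + 1) = 0 := by
        by_contra h
        have := (hγ.2 (r + 1) (by omega)).1 h
        omega
      omega
  have hanti := hγ.anti hi hir
  refine hcore (x + r + 1 - m, i) ⟨hi, by simp only; omega, by simp only; omega⟩ ?_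
  rw [hook_eq hγ (r := r) (by omega) hi hir (by omega) hnext.2]
  omega

lemma zero_notMem_beads {γ : ℕ → ℕ} {m : ℕ} (hγ : IsPartitionOfLength γ m) :
    0 ∉ beads γ m := by
  rintro ⟨i, hi, him, h⟩
  have := (hγ.2 i hi).2 him
  omega

/-- The runner `0` of the abacus of a `d`-core with `m` beads is empty. -/
lemma runnerCount_zero {d : ℕ} (hd : 1 ≤ d) {γ : ℕ → ℕ} {m : ℕ}
    (hγ : IsPartitionOfLength γ m) (hcore : IsDCore d γ) : runnerCount d γ m 0 = 0 := by
  have key : ∀ q : ℕ, d * q ∉ beads γ m := by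
    intro q
    induction q with
    | zero => simpa using zero_notMem_beads hγ
    | succ q ih => exact fun h => ih (bead_sub_mem hd hγ hcore (by rwa [mul_add_one] at h))
  have : {b | b ∈ beads γ m ∧ b % d = 0} = ∅ := by
    ext b
    simp only [Set.mem_ofPred_eq, Set.mem_empty_iff_false, iff_false, not_and]
    intro hb h0
    obtain ⟨q, rfl⟩ := Nat.dvd_of_mod_eq_zero h0
    exact key q hb
  rw [runnerCount, this, Set.ncard_empty]

/-! ### Residue counts -/

lemma runnerCount_eq {d : ℕ} [NeZero d] {γ : ℕ → ℕ} {m : ℕ} (hγ : IsPartitionOfLength γ m)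
    (j : ZMod d) : runnerCount d γ m j.val =
      #{i ∈ Icc 1 m | ((i : ℕ) : ZMod d) - (γ i : ZMod d) = m - j} := by
  have hset : {b | b ∈ beads γ m ∧ b % d = j.val} =
      ((({i ∈ Icc 1 m | ((i : ℕ) : ZMod d) - (γ i : ZMod d) = m - j} : Finset ℕ).image
        fun i => γ i + (m - i) : Finset ℕ) : Set ℕ) := by
    have hmod : ∀ i ≤ m, ((γ i + (m - i)) % d = j.val ↔
        (i : ZMod d) - (γ i : ZMod d) = m - j) := by
      intro i him
      rw [← ZMod.val_natCast, (ZMod.val_injective d).eq_iff, Nat.cast_add, Nat.cast_sub him]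
      constructor <;> intro h
      · rw [← h]; ring
      · linear_combination -h
    ext b
    simp only [beads, Set.mem_ofPred_eq, coe_image, Set.mem_image, mem_coe, mem_filter, mem_Icc]
    constructor
    · rintro ⟨⟨i, hi, him, rfl⟩, h⟩
      exact ⟨i, ⟨⟨hi, him⟩, (hmod i him).1 h⟩, rfl⟩
    · rintro ⟨i, ⟨⟨hi, him⟩, h⟩, rfl⟩
      exact ⟨⟨i, hi, him, rfl⟩, (hmod i him).2 h⟩
  rw [runnerCount, hset, Set.ncard_coe_finset, card_image_of_injOn]
  intro a ha b hb hab
  simp only [coe_filter, mem_Icc, Set.mem_ofPred_eq] at ha hb hab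
  rcases lt_trichotomy a b with h | h | h
  · have := hγ.anti ha.1.1 h.le
    omega
  · exact h
  · have := hγ.anti hb.1.1 h.le
    omega

lemma residue_eq {d : ℕ} {γ : ℕ → ℕ} {m : ℕ} (hγ : IsPartitionOfLength γ m) (k : ZMod d) :
    residue d γ k = ∑ i ∈ Icc 1 m, #{c ∈ Icc 1 (γ i) | ((i : ℕ) : ZMod d) - ((c : ℕ) : ZMod d) = k} := by
  have hset : {c | c ∈ cells γ ∧ (c.2 : ZMod d) - (c.1 : ZMod d) = k} =
      ((((Icc 1 m).sigma fun i =>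
        ({c ∈ Icc 1 (γ i) | ((i : ℕ) : ZMod d) - (c : ZMod d) = k} : Finset ℕ)).image
          fun p => (p.2, p.1) : Finset (ℕ × ℕ)) : Set (ℕ × ℕ)) := by
    ext ⟨a, b⟩
    simp only [cells, Set.mem_ofPred_eq, coe_image, Set.mem_image, mem_coe, mem_sigma, mem_filter,
      mem_Icc, Prod.mk.injEq, Sigma.exists]
    constructor
    · rintro ⟨⟨h1, h2, h3⟩, h⟩
      exact ⟨b, a, ⟨⟨h1, (hγ.2 b h1).1 (by omega)⟩, ⟨h2, h3⟩, h⟩, rfl, rfl⟩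
    · rintro ⟨_, _, ⟨⟨h1, _⟩, ⟨h2, h3⟩, h⟩, rfl, rfl⟩
      exact ⟨⟨h1, h2, h3⟩, h⟩
  rw [residue, hset, Set.ncard_coe_finset, card_image_of_injective, card_sigma]
  rintro ⟨a, b⟩ ⟨a', b'⟩ h
  simp only [Prod.mk.injEq] at h
  obtain ⟨rfl, rfl⟩ := h
  rfl

/-- Along a row of length `n`, each cell of residue `k - 1` follows a cell of residue `k`, up to the
two ends of the row. -/
lemma row_telescope {d : ℕ} (i k : ZMod d) (n : ℕ) :
    (#{c ∈ Icc 1 n | i - ((c : ℕ) : ZMod d) = k} : ℤ) -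
      #{c ∈ Icc 1 n | i - ((c : ℕ) : ZMod d) = k - 1} =
      (if i - (n : ZMod d) = k then 1 else 0) - if i = k then 1 else 0 := by
  induction n with
  | zero => simp
  | succ n ih =>
    have h1 : (i - ((n + 1 : ℕ) : ZMod d) = k - 1) ↔ i - (n : ZMod d) = k := by
      push_cast
      constructor <;> intro h <;> linear_combination h
    have hins : Icc 1 (n + 1) = insert (n + 1) (Icc 1 n) := by ext; simp; omega
    have hni : n + 1 ∉ Icc 1 n := by simp
    simp only [card_filter, Nat.cast_sum] at ih ⊢
    rw [hins, sum_insert hni, sum_insert hni]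
    simp only [h1]
    push_cast at ih ⊢
    linarith

lemma residue_sub {d : ℕ} [NeZero d] {γ : ℕ → ℕ} {m : ℕ} (hγ : IsPartitionOfLength γ m)
    (j : ZMod d) :
    (residue d γ (m - j) : ℤ) - residue d γ (m - j - 1) =
      runnerCount d γ m j.val - #{i ∈ Icc 1 m | ((i : ℕ) : ZMod d) = m - j} := by
  rw [residue_eq hγ, residue_eq hγ, runnerCount_eq hγ]
  push_cast
  rw [← sum_sub_distrib, sum_congr rfl fun (i : ℕ) _ => row_telescope (i : ZMod d) (m - j) (γ i),
    sum_sub_distrib]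
  simp only [card_filter]
  push_cast
  rfl

/-! ### Counting integers in a residue class -/

lemma val_sub_one {d : ℕ} [NeZero d] (z : ZMod d) :
    (d : ℤ) * (if z = 0 then 1 else 0) = 1 + (z - 1).val - z.val := by
  obtain ⟨w, rfl⟩ : ∃ w, z = w + 1 := ⟨z - 1, by ring⟩
  have hv : (w + 1).val = (w.val + 1) % d := by
    rw [← ZMod.val_natCast, Nat.cast_add, ZMod.natCast_zmod_val, Nat.cast_one]
  have hw := w.val_lt
  simp only [add_sub_cancel_right, ← ZMod.val_eq_zero, hv]
  generalize w.val = v at hw ⊢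
  rcases (Nat.succ_le_of_lt hw).lt_or_eq with h | h
  · rw [Nat.mod_eq_of_lt h]; simp [add_comm]
  · rw [← Nat.succ_eq_add_one, h, Nat.mod_self]; simp; omega

lemma card_range_residue {d : ℕ} [NeZero d] (j : ZMod d) (m : ℕ) :
    (d : ℤ) * #{x ∈ range m | ((x : ℕ) : ZMod d) = j} =
      m - j.val + (j - (m : ZMod d)).val := by
  induction m with
  | zero => simp
  | succ m ih =>
    have h := val_sub_one (j - (m : ZMod d))
    have hiff : j - (m : ZMod d) = 0 ↔ (m : ZMod d) = j := by rw [sub_eq_zero, eq_comm]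
    simp only [hiff] at h
    simp only [card_filter, Nat.cast_sum] at ih ⊢
    rw [sum_range_succ, mul_add, ih]
    push_cast
    rw [h, ← sub_sub]
    ring

lemma card_Icc_residue {d : ℕ} (j : ZMod d) (m : ℕ) :
    #{i ∈ Icc 1 m | ((i : ℕ) : ZMod d) = m - j} = #{x ∈ range m | ((x : ℕ) : ZMod d) = j} := by
  refine card_bij' (fun i _ => m - i) (fun x _ => m - x) ?_ ?_ ?_ ?_
  · intro i hi
    simp only [mem_filter, mem_Icc, mem_range] at hi ⊢
    refine ⟨by omega, ?_⟩
    rw [Nat.cast_sub hi.1.2, hi.2]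
    ring
  · intro x hx
    simp only [mem_filter, mem_Icc, mem_range] at hx ⊢
    refine ⟨by omega, ?_⟩
    rw [Nat.cast_sub hx.1.le, hx.2]
  · intro i hi
    simp only [mem_filter, mem_Icc] at hi
    omega
  · intro x hx
    simp only [mem_filter, mem_range] at hx
    omega

/-- if `γ` is a `d`-core of length `m`, then
`k^γ_j = l^γ_{j+1-m}` for every `j ∈ ℤ/dℤ`. -/
theorem kFam_eq_lFam (d : ℕ) (hd : 1 ≤ d) (γ : ℕ → ℕ) (m : ℕ)
    (hγ : IsPartitionOfLength γ m) (hcore : IsDCore d γ) (j : ZMod d) :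
    kFam d γ m j = lFam d γ m (j + 1 - (m : ZMod d)) := by
  have : NeZero d := ⟨by omega⟩
  have e1 : 1 - (j + 1 - (m : ZMod d)) = m - j := by ring
  have e2 : -(j + 1 - (m : ZMod d)) = m - j - 1 := by ring
  have e3 : j + 1 - (m : ZMod d) - 1 = j - m := by ring
  rw [kFam, lFam, bRunner, e1, e2, e3, residue_sub hγ, runnerCount_zero hd hγ hcore,
    card_Icc_residue]
  push_cast
  linear_combination card_range_residue j m
end

section
/- Let d ≥ 2 be an integer and let γ be a d-core with γ_1 > 0 and length m, and set γ' = (γ_2, γ_3, …) (again a d-core). Then there is a unique y ∈ {0,…,d−1} such that b_y(γ) = b_y(γ') + 1 and b_j(γ) = b_j(γ') for all j ≠ y; moreover y ≠ 0 and y ≡ γ_1 + m − 1 (mod d). Consequently k^γ_y = k^{γ'}_y + d and k^γ_j = k^{γ'}_j for all j ≠ y. -/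
/-- The partition `γ' = (γ_2, γ_3, …)` obtained by deleting the first part. -/
def shift (γ : ℕ → ℕ) : ℕ → ℕ := fun i => γ (i + 1)

theorem IsPartitionOfLength.anti_s1 {γ : ℕ → ℕ} {m : ℕ} (h : IsPartitionOfLength γ m) {a b : ℕ}
    (ha : 1 ≤ a) (hab : a ≤ b) : γ b ≤ γ a := by
  induction b, hab using Nat.le_induction with
  | base => exact le_rfl
  | succ n hn ih => exact (h.1 n (ha.trans hn)).trans ih

/-- Arm-leg formula: if column `c` has length `r`, the hook of the cell `(c, j)` consists of the
cells `(a, j)` with `c ≤ a ≤ γ_j` and the cells `(c, b)` with `j < b ≤ r`. -/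
theorem hook_eq_s1 {γ : ℕ → ℕ} {c j r : ℕ} (hc : 1 ≤ c) (hj : 1 ≤ j)
    (hcol : ∀ b, 1 ≤ b → (c ≤ γ b ↔ b ≤ r)) :
    hook γ (c, j) = (γ j + 1 - c) + (r - j) := by
  have hset : {c' | c' ∈ cells γ ∧ (c, j).1 ≤ c'.1 ∧ (c, j).2 ≤ c'.2 ∧
      (c'.1 - (c, j).1) * (c'.2 - (c, j).2) = 0} =
      ((Finset.Icc c (γ j) ×ˢ {j} ∪ {c} ×ˢ Finset.Ioc j r : Finset (ℕ × ℕ)) : Set (ℕ × ℕ)) := by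
    ext ⟨a, b⟩
    simp only [cells, Set.mem_ofPred_eq, Finset.coe_union, Finset.coe_product, Set.mem_union,
      Set.mem_prod, Finset.coe_Icc, Finset.coe_Ioc, Finset.coe_singleton, Set.mem_Icc,
      Set.mem_Ioc, Set.mem_singleton_iff, Nat.mul_eq_zero]
    constructor
    · rintro ⟨⟨hb, -, hab⟩, hca, hjb, h⟩
      have h1 := hcol b hb
      rcases Nat.eq_or_lt_of_le hjb with rfl | hlt
      · exact Or.inl ⟨⟨hca, hab⟩, rfl⟩
      · have : a = c := by omega
        subst this
        exact Or.inr ⟨rfl, hlt, h1.1 hab⟩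
    · rintro (⟨⟨h1, h2⟩, rfl⟩ | ⟨rfl, h1, h2⟩)
      · exact ⟨⟨hj, hc.trans h1, h2⟩, h1, le_rfl, Or.inr (by omega)⟩
      · exact ⟨⟨by omega, hc, (hcol b (by omega)).2 h2⟩, le_rfl, h1.le, Or.inl (by omega)⟩
  rw [hook, hset, Set.ncard_coe_finset, Finset.card_union_of_disjoint]
  · simp
  · rw [Finset.disjoint_left]
    rintro ⟨a, b⟩ h1 h2
    simp only [Finset.mem_product, Finset.mem_singleton, Finset.mem_Ioc] at h1 h2
    omega

/-- A bead at `x + d` above an empty position `x` yields a cell of hook length `d`. If `r` is the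
number of beads beyond `x`, the cell lies in column `x + 1 + r - m`, the number of empty positions
up to `x`, and that column has length `r`. -/
theorem exists_hook_eq {γ : ℕ → ℕ} {m x d : ℕ} (hγ : IsPartitionOfLength γ m) (hd : 0 < d)
    (hx : x ∉ beads γ m) (hxd : x + d ∈ beads γ m) : ∃ c ∈ cells γ, hook γ c = d := by
  obtain ⟨j, hj1, hjm, hj⟩ := hxd
  obtain ⟨r, hr⟩ : ∃ r, r = Nat.findGreatest (fun l => x < γ l + (m - l)) m := ⟨_, rfl⟩
  have hjr : j ≤ r := by
    rw [hr]; exact Nat.le_findGreatest hjm (by omega)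
  have hrm : r ≤ m := by rw [hr]; exact Nat.findGreatest_le m
  have hxr : x < γ r + (m - r) := by
    rw [hr]
    exact Nat.findGreatest_spec (P := fun l => x < γ l + (m - l)) hjm (by omega)
  have hnext : γ (r + 1) + m < x + 1 + r := by
    rcases Nat.eq_or_lt_of_le hrm with h | h
    · have := hγ.2 (m + 1) (by omega)
      rw [h]
      omega
    · have h1 : ¬ x < γ (r + 1) + (m - (r + 1)) :=
        Nat.findGreatest_is_greatest (P := fun l => x < γ l + (m - l)) (by omega) h
      have h2 : x ≠ γ (r + 1) + (m - (r + 1)) := fun e => hx ⟨r + 1, by omega, h, e⟩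
      omega
  have hcol : ∀ b, 1 ≤ b → (x + 1 + r - m ≤ γ b ↔ b ≤ r) := by
    intro b hb
    constructor
    · intro h
      by_contra! hlt
      have := hγ.anti_s1 (by omega) (show r + 1 ≤ b by omega)
      omega
    · intro h
      have := hγ.anti_s1 hb h
      omega
  have hcell := (hcol j hj1).2 hjr
  refine ⟨(x + 1 + r - m, j), ⟨hj1, by dsimp only; omega, hcell⟩, ?_⟩
  rw [hook_eq_s1 (by omega) hj1 hcol]
  omega

/-- No bead of a `d`-core lies on runner `0` when the number of beads is the length. -/
theorem not_bead_mul {γ : ℕ → ℕ} {m d : ℕ} (hγ : IsPartitionOfLength γ m) (hd : 0 < d)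
    (hcore : IsDCore d γ) (k : ℕ) : k * d ∉ beads γ m := by
  induction k with
  | zero =>
    rintro ⟨i, hi1, him, h⟩
    have := (hγ.2 i hi1).2 him
    omega
  | succ k ih =>
    intro h
    rw [Nat.succ_mul] at h
    obtain ⟨c, hc, hk⟩ := exists_hook_eq hγ hd ih h
    exact hcore c hc hk

theorem beads_eq_insert {γ : ℕ → ℕ} {m : ℕ} (hm : 1 ≤ m) :
    beads γ m = insert (γ 1 + m - 1) (beads (shift γ) (m - 1)) := by
  ext b
  simp only [beads, shift, Set.mem_ofPred_eq, Set.mem_insert_iff]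
  constructor
  · rintro ⟨i, h1, h2, rfl⟩
    rcases Nat.eq_or_lt_of_le h1 with rfl | h
    · left; omega
    · obtain ⟨i, rfl⟩ := Nat.exists_eq_add_of_le' h1
      exact Or.inr ⟨i, by omega, by omega, by omega⟩
  · rintro (rfl | ⟨i, h1, h2, rfl⟩)
    · exact ⟨1, le_rfl, hm, by omega⟩
    · exact ⟨i + 1, by omega, by omega, by omega⟩

theorem new_notMem_beads {γ : ℕ → ℕ} {m : ℕ} (hγ : IsPartitionOfLength γ m) :
    γ 1 + m - 1 ∉ beads (shift γ) (m - 1) := by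
  rintro ⟨i, h1, h2, h⟩
  have : γ (i + 1) ≤ γ 1 := hγ.anti_s1 le_rfl (by omega)
  simp only [shift] at h
  omega

theorem beads_finite (γ : ℕ → ℕ) (N : ℕ) : (beads γ N).Finite := by
  refine ((Set.finite_Icc 1 N).image fun i => γ i + (N - i)).subset ?_
  rintro b ⟨i, h1, h2, rfl⟩
  exact ⟨i, ⟨h1, h2⟩, rfl⟩

theorem runnerCount_shift {γ : ℕ → ℕ} {m : ℕ} (d : ℕ) (hγ : IsPartitionOfLength γ m) (hm : 1 ≤ m)
    (j : ℕ) : runnerCount d γ m j =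
      runnerCount d (shift γ) (m - 1) j + if (γ 1 + m - 1) % d = j then 1 else 0 := by
  unfold runnerCount
  rw [beads_eq_insert hm]
  split_ifs with h
  · rw [← Set.ncard_insert_of_notMem (a := γ 1 + m - 1) (fun hmem => new_notMem_beads hγ hmem.1)
      ((beads_finite _ _).subset fun _ hb => hb.1)]
    congr 1
    ext b
    simp only [Set.mem_ofPred_eq, Set.mem_insert_iff]
    constructor
    · rintro ⟨rfl | hb, hj⟩
      exacts [Or.inl rfl, Or.inr ⟨hb, hj⟩]
    · rintro (rfl | ⟨hb, hj⟩)
      exacts [⟨Or.inl rfl, h⟩, ⟨Or.inr hb, hj⟩]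
  · congr 1
    ext b
    simp only [Set.mem_ofPred_eq, Set.mem_insert_iff]
    constructor
    · rintro ⟨rfl | hb, hj⟩
      exacts [absurd hj h, ⟨hb, hj⟩]
    · rintro ⟨hb, hj⟩
      exact ⟨Or.inr hb, hj⟩

/-- for a `d`-core `γ` with `γ_1 > 0` and length `m`, with
`γ' = (γ_2, γ_3, …)`, there is a unique `y ∈ {0,…,d-1}` with
`b_y(γ) = b_y(γ') + 1` and `b_j(γ) = b_j(γ')` for `j ≠ y`; moreover `y ≠ 0`,
`y ≡ γ_1 + m - 1 (mod d)`, and consequently `k^γ_y = k^{γ'}_y + d` and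
`k^γ_j = k^{γ'}_j` for all `j ≠ y`. -/
theorem bRunner_shift (d : ℕ) (hd : 2 ≤ d) (γ : ℕ → ℕ) (m : ℕ)
    (hγ : IsPartitionOfLength γ m) (hcore : IsDCore d γ) (hpos : 0 < γ 1) :
    ∃ y : ℕ, y < d ∧
      bRunner d γ m y = bRunner d (shift γ) (m - 1) y + 1 ∧
      (∀ j, j < d → j ≠ y → bRunner d γ m j = bRunner d (shift γ) (m - 1) j) ∧
      (∀ y', y' < d →
        bRunner d γ m y' = bRunner d (shift γ) (m - 1) y' + 1 →
        (∀ j, j < d → j ≠ y' → bRunner d γ m j = bRunner d (shift γ) (m - 1) j) →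
        y' = y) ∧
      y ≠ 0 ∧
      ((y : ZMod d) = ((γ 1 + m - 1 : ℕ) : ZMod d)) ∧
      kFam d γ m (y : ZMod d) = kFam d (shift γ) (m - 1) (y : ZMod d) + d ∧
      (∀ j : ZMod d, j ≠ (y : ZMod d) →
        kFam d γ m j = kFam d (shift γ) (m - 1) j) := by
  have hm : 1 ≤ m := (hγ.2 1 le_rfl).1 hpos.ne'
  have hd0 : 0 < d := by omega
  have : NeZero d := ⟨hd0.ne'⟩
  have hy0 : (γ 1 + m - 1) % d ≠ 0 := by
    intro h
    obtain ⟨k, hk⟩ := Nat.dvd_of_mod_eq_zero h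
    refine not_bead_mul hγ hd0 hcore k ?_
    rw [mul_comm, ← hk, beads_eq_insert hm]
    exact Set.mem_insert _ _
  have hb : ∀ j, bRunner d γ m j = bRunner d (shift γ) (m - 1) j +
      if (γ 1 + m - 1) % d = j then 1 else 0 := by
    intro j
    simp only [bRunner, runnerCount_shift d hγ hm, if_neg hy0]
    push_cast
    ring
  have hylt : (γ 1 + m - 1) % d < d := Nat.mod_lt _ hd0
  have hcast : (((γ 1 + m - 1) % d : ℕ) : ZMod d) = ((γ 1 + m - 1 : ℕ) : ZMod d) :=
    ZMod.natCast_mod _ _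
  refine ⟨(γ 1 + m - 1) % d, hylt, ?_, ?_, ?_, hy0, hcast, ?_, ?_⟩
  · rw [hb, if_pos rfl]
  · intro j _ hne
    rw [hb, if_neg hne.symm, add_zero]
  · intro y' _ h _
    by_contra hne
    rw [hb, if_neg (Ne.symm hne)] at h
    omega
  · rw [kFam, kFam, ZMod.val_natCast_of_lt hylt, hb, if_pos rfl]
    ring
  · intro j hj
    rw [kFam, kFam, hb, if_neg, add_zero]
    intro h
    exact hj (by rw [h, ZMod.natCast_zmod_val])
end

section
/- Let d ≥ 1 be an integer and let γ be a partition with γ_1 > 0 and length m, and set γ' = (γ_2, γ_3, …) (a partition of length m − 1). Then for every j ∈ ℤ/dℤ one has l^γ_j = l^{γ'}_{j+1} + d·ε(j), where ε(j) = 1 if j ≡ γ_1 (mod d) and ε(j) = 0 otherwise. -/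
/-- The number of cells of residue `k` in a first row of length `n`. The cell `(i + 1, 1)`, of
residue `-i`, is indexed by `i ∈ {0, …, n - 1}`. -/
def firstRow (d n : ℕ) (k : ZMod d) : ℕ :=
  ((Finset.range n).filter fun i : ℕ => -(i : ZMod d) = k).card

lemma finite_cells {γ : ℕ → ℕ} {m : ℕ} (hγ : IsPartitionOfLength γ m) : (cells γ).Finite := by
  have hle : ∀ i, γ (i + 1) ≤ γ 1 := by
    intro i
    induction i with
    | zero => exact le_rfl
    | succ i ih => exact (hγ.1 (i + 1) (by omega)).trans ih
  refine ((Set.finite_Iic (γ 1)).prod (Set.finite_Iic m)).subset ?_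
  rintro ⟨i, j⟩ ⟨hj, hi, hij⟩
  simp only at hj hi hij
  obtain ⟨j, rfl⟩ := Nat.exists_eq_add_of_le' hj
  exact ⟨hij.trans (hle j), (hγ.2 (j + 1) hj).1 (by omega)⟩

lemma residue_eq_shift_add (d : ℕ) {γ : ℕ → ℕ} {m : ℕ} (hγ : IsPartitionOfLength γ m)
    (k : ZMod d) :
    residue d γ k = residue d (shift γ) (k - 1) + firstRow d (γ 1) k := by
  have hup : Function.Injective fun c : ℕ × ℕ => (c.1, c.2 + 1) := by
    rintro ⟨a, b⟩ ⟨a', b'⟩ h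
    simpa using h
  have hrow : Function.Injective fun i : ℕ => (i + 1, 1) := by
    intro a b h
    simpa using h
  have hsplit : {c : ℕ × ℕ | c ∈ cells γ ∧ (c.2 : ZMod d) - (c.1 : ZMod d) = k} =
      (fun c : ℕ × ℕ => (c.1, c.2 + 1)) ''
        {c | c ∈ cells (shift γ) ∧ (c.2 : ZMod d) - (c.1 : ZMod d) = k - 1} ∪
      (fun i : ℕ => (i + 1, 1)) ''
        ((Finset.range (γ 1)).filter fun i : ℕ => -(i : ZMod d) = k : Finset ℕ) := by
    ext ⟨a, b⟩
    simp only [cells, shift, Set.mem_ofPred_eq, Set.mem_union, Set.mem_image, Prod.exists,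
      Prod.mk.injEq, Finset.coe_filter, Finset.mem_range]
    constructor
    · rintro ⟨⟨hb, ha, hab⟩, hk⟩
      obtain ⟨b, rfl⟩ := Nat.exists_eq_add_of_le' hb
      obtain ⟨a, rfl⟩ := Nat.exists_eq_add_of_le' ha
      rcases Nat.eq_zero_or_pos b with rfl | hb
      · refine Or.inr ⟨a, ⟨by simpa using hab, ?_⟩, rfl, rfl⟩
        rw [← hk]; push_cast; ring
      · refine Or.inl ⟨a + 1, b, ⟨⟨hb, ha, hab⟩, ?_⟩, rfl, rfl⟩
        rw [← hk]; push_cast; ring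
    · rintro (⟨a, b, ⟨⟨hb, ha, hab⟩, hk⟩, rfl, rfl⟩ | ⟨i, ⟨hi, hk⟩, rfl, rfl⟩)
      · refine ⟨⟨by omega, ha, hab⟩, ?_⟩
        push_cast
        linear_combination hk
      · refine ⟨⟨le_rfl, by omega, hi⟩, ?_⟩
        rw [← hk]; push_cast; ring
  have hfin : {c : ℕ × ℕ | c ∈ cells γ ∧ (c.2 : ZMod d) - (c.1 : ZMod d) = k}.Finite :=
    (finite_cells hγ).subset fun c hc => hc.1
  rw [hsplit, Set.finite_union] at hfin
  rw [residue, hsplit, Set.ncard_union_eq ?_ hfin.1 hfin.2, Set.ncard_image_of_injective _ hup,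
    Set.ncard_image_of_injective _ hrow, Set.ncard_coe_finset, residue, firstRow]
  rw [Set.disjoint_left]
  rintro _ ⟨⟨a, b⟩, ⟨⟨hb, -⟩, -⟩, rfl⟩ ⟨i, -, h⟩
  simp only [Prod.mk.injEq] at h hb
  omega

/-- Residues `1 - j` and `-j` in a row of length `n` count the `i ≡ j` in `{1, …, n}` and in
`{0, …, n - 1}` respectively, so only the two end points contribute to the difference. -/
lemma firstRow_sub (d n : ℕ) (j : ZMod d) :
    (firstRow d n (1 - j) : ℤ) - firstRow d n (-j) =
      (if j = (n : ZMod d) then 1 else 0) - (if j = 0 then 1 else 0) := by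
  have h1 (i : ℕ) : -(i : ZMod d) = 1 - j ↔ j = ((i + 1 : ℕ) : ZMod d) := by
    push_cast
    constructor <;> intro h <;> linear_combination h
  have h2 (i : ℕ) : -(i : ZMod d) = -j ↔ j = (i : ZMod d) := by
    rw [neg_inj, eq_comm]
  simp only [firstRow, h1, h2, Finset.card_filter]
  push_cast
  rw [← Finset.sum_sub_distrib]
  simpa using Finset.sum_range_sub (fun i : ℕ => if j = (i : ZMod d) then (1 : ℤ) else 0) n

lemma val_sub_one_eq (d : ℕ) (hd : 1 ≤ d) (j : ZMod d) :
    ((j - 1).val : ℤ) = j.val - 1 + d * (if j = 0 then 1 else 0) := by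
  obtain ⟨d, rfl⟩ := Nat.exists_eq_add_of_le' hd
  split_ifs with h
  · subst h
    simp [ZMod.val_neg_one]
  · -- a nonzero class is `k + 1` with `k + 1 < d`, so no reduction takes place
    have hv : j.val ≠ 0 := fun h0 => h ((ZMod.val_eq_zero j).1 h0)
    obtain ⟨k, hk⟩ := Nat.exists_eq_succ_of_ne_zero hv
    have hlt := ZMod.val_lt j
    have hj : j - 1 = (k : ZMod (d + 1)) := by
      rw [← ZMod.natCast_zmod_val j, hk]
      push_cast
      ring
    rw [hj, ZMod.val_natCast_of_lt (by omega), hk]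
    push_cast
    ring

/-- for a partition `γ` with `γ_1 > 0` and length `m`, with
`γ' = (γ_2, γ_3, …)` (of length `m - 1`), one has, for every `j ∈ ℤ/dℤ`,
`l^γ_j = l^{γ'}_{j+1} + d·ε(j)` where `ε(j) = 1` if `j ≡ γ_1 (mod d)` and
`ε(j) = 0` otherwise. -/
theorem lFam_shift (d : ℕ) (hd : 1 ≤ d) (γ : ℕ → ℕ) (m : ℕ)
    (hγ : IsPartitionOfLength γ m) (hpos : 0 < γ 1) (j : ZMod d) :
    lFam d γ m j =
      lFam d (shift γ) (m - 1) (j + 1) +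
        (d : ℤ) * (if j = ((γ 1 : ℕ) : ZMod d) then 1 else 0) := by
  have hm : 1 ≤ m := (hγ.2 1 le_rfl).1 hpos.ne'
  have e1 : 1 - j - 1 = -j := by ring
  have e2 : 1 - (j + 1) = -j := by ring
  have e3 : -(j + 1) = -j - 1 := by ring
  have hrow := firstRow_sub d (γ 1) j
  simp only [lFam, residue_eq_shift_add d hγ (1 - j), residue_eq_shift_add d hγ (-j), e1, e2, e3,
    add_sub_cancel_right, val_sub_one_eq d hd j]
  push_cast [Nat.cast_sub hm]
  linear_combination (d : ℤ) * hrow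
end

section
/- Let Z ⊆ ℂ^8 be the set of points (x1, x2, y1, y2, a, b, c, e) satisfying the nine equations: (1) a·b + 12·c·e + 2·x1·y1 − 15·e^4 + 234·e^2 + 192·e = 0; (2) 3·a·y1·e + 4·b·c − 9·b·e^3 + 126·b·e + 2·x1·y2 = 0; (3) 3·a^2·e − 2·b·x2 + 8·c·x1 − 9·x1·e^3 − 108·x1·e = 0; (4) 4·a·c − 9·a·e^3 + 126·a·e + 3·b·x1·e + 2·x2·y1 = 0; (5) 2·a·y2 − 3·b^2·e − 8·c·y1 + 9·y1·e^3 − 108·y1·e = 0; (6) −a^3 − 3·a·x1·e^2 + 48·a·x1 + 2·a·y1^2 − b^3 + 2·b·x1^2 − 3·b·y1·e^2 + 48·b·y1 − 8·c·x2 − 8·c·y2 + 10·x2·e^3 − 156·x2·e + 128·x2 + 10·y2·e^3 − 156·y2·e − 128·y2 = 0; (7) 16·c^2 + 720·c·e + 9·x1·y1·e^2 + 2·x2·y2 − 27·e^6 + 864·e^3 + 6804·e^2 = 0; (8) −2·a·y1^2 + b^3 + 3·b·y1·e^2 − 48·b·y1 + 8·c·y2 − 10·y2·e^3 + 156·y2·e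 + 128·y2 = 0; (9) 5·a^2·y1 + 444·a·b + 5·b^2·x1 + 280·c·e^3 + 4848·c·e − 1280·c + 60·x1·y1·e^2 + 648·x1·y1 + 10·x2·y2 − 360·e^6 + 7200·e^3 + 88776·e^2 + 44928·e = 0. Then the set of points of Z fixed by the ℂ^×-action ξ·(x1,x2,y1,y2,a,b,c,e) = (ξ^4 x1, ξ^6 x2, ξ^{−4} y1, ξ^{−6} y2, ξ^2 a, ξ^{−2} b, c, e) (that is, points with x1 = x2 = y1 = y2 = a = b = 0) consists of exactly four points: (0,0,0,0,0,0,468,8), (0,0,0,0,0,0,0,0), (0,0,0,0,0,0,−45,2), and (0,0,0,0,0,0,−18,−4). -/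
/-!
A point fixed by `ξ = 2` already has all coordinates of nonzero weight equal to zero, since `2 ^ k ≠ 1`
for `k ≠ 0`. On the remaining `(c, e)`-plane the first defining equation reads
`3 e (4 c - (5 e³ - 78 e - 64)) = 0`. If `e = 0`, the seventh equation gives `c = 0`; otherwise
`c` is a polynomial in `e`, and substituting it into the seventh equation leaves
`(e - 8) (e - 2)² (e + 4)³ = 0` up to a scalar. The other equations impose no further condition.
-/

/-- Points of `ℂ^8` with coordinates `(x1, x2, y1, y2, a, b, c, e)`. -/
abbrev P8 : Type := ℂ × ℂ × ℂ × ℂ × ℂ × ℂ × ℂ × ℂ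

/-- The nine defining equations of the Calogero–Moser space of `G₄` at the
spetsial parameter, in the coordinates `(x1, x2, y1, y2, a, b, c, e)`. -/
def CMG4 (x1 x2 y1 y2 a b c e : ℂ) : Prop :=
  a*b + 12*c*e + 2*x1*y1 - 15*e^4 + 234*e^2 + 192*e = 0 ∧
  3*a*y1*e + 4*b*c - 9*b*e^3 + 126*b*e + 2*x1*y2 = 0 ∧
  3*a^2*e - 2*b*x2 + 8*c*x1 - 9*x1*e^3 - 108*x1*e = 0 ∧
  4*a*c - 9*a*e^3 + 126*a*e + 3*b*x1*e + 2*x2*y1 = 0 ∧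
  2*a*y2 - 3*b^2*e - 8*c*y1 + 9*y1*e^3 - 108*y1*e = 0 ∧
  -a^3 - 3*a*x1*e^2 + 48*a*x1 + 2*a*y1^2 - b^3 + 2*b*x1^2 - 3*b*y1*e^2 + 48*b*y1
    - 8*c*x2 - 8*c*y2 + 10*x2*e^3 - 156*x2*e + 128*x2 + 10*y2*e^3 - 156*y2*e - 128*y2 = 0 ∧
  16*c^2 + 720*c*e + 9*x1*y1*e^2 + 2*x2*y2 - 27*e^6 + 864*e^3 + 6804*e^2 = 0 ∧
  -2*a*y1^2 + b^3 + 3*b*y1*e^2 - 48*b*y1 + 8*c*y2 - 10*y2*e^3 + 156*y2*e + 128*y2 = 0 ∧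
  5*a^2*y1 + 444*a*b + 5*b^2*x1 + 280*c*e^3 + 4848*c*e - 1280*c + 60*x1*y1*e^2
    + 648*x1*y1 + 10*x2*y2 - 360*e^6 + 7200*e^3 + 88776*e^2 + 44928*e = 0

/-- The subset `Z ⊆ ℂ^8` cut out by the nine equations. -/
def Zset : Set P8 :=
  {p | CMG4 p.1 p.2.1 p.2.2.1 p.2.2.2.1 p.2.2.2.2.1 p.2.2.2.2.2.1
    p.2.2.2.2.2.2.1 p.2.2.2.2.2.2.2}

/-- The `ℂ^×`-action
`ξ·(x1,x2,y1,y2,a,b,c,e) = (ξ⁴x1, ξ⁶x2, ξ⁻⁴y1, ξ⁻⁶y2, ξ²a, ξ⁻²b, c, e)`. -/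
noncomputable def cAct (ξ : ℂˣ) (p : P8) : P8 :=
  ((ξ : ℂ)^4 * p.1, (ξ : ℂ)^6 * p.2.1,
   ((ξ : ℂ)⁻¹)^4 * p.2.2.1, ((ξ : ℂ)⁻¹)^6 * p.2.2.2.1,
   (ξ : ℂ)^2 * p.2.2.2.2.1, ((ξ : ℂ)⁻¹)^2 * p.2.2.2.2.2.1,
   p.2.2.2.2.2.2.1, p.2.2.2.2.2.2.2)

/-- The points of the `(c, e)`-plane satisfying the first and seventh defining equations of `Z`,
restricted to that plane. -/
lemma ce_cases {c e : ℂ} (h1 : 12*c*e - 15*e^4 + 234*e^2 + 192*e = 0)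
    (h7 : 16*c^2 + 720*c*e - 27*e^6 + 864*e^3 + 6804*e^2 = 0) :
    (c = 468 ∧ e = 8) ∨ (c = 0 ∧ e = 0) ∨ (c = -45 ∧ e = 2) ∨ (c = -18 ∧ e = -4) := by
  by_cases he : e = 0
  · subst he
    exact Or.inr (Or.inl ⟨by simpa using h7, rfl⟩)
  · have hc : c = (5*e^3 - 78*e - 64) / 4 :=
      mul_left_cancel₀ he (by linear_combination h1 / 12)
    have hf : (e - 8) * ((e - 2)^2 * (e + 4)^3) = 0 := by
      rw [hc] at h7
      linear_combination (-1/2) * h7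
    rcases mul_eq_zero.mp hf with h | h
    · obtain rfl : e = 8 := by linear_combination h
      exact Or.inl ⟨by rw [hc]; norm_num, rfl⟩
    rcases mul_eq_zero.mp h with h | h
    · obtain rfl : e = 2 := by linear_combination eq_zero_of_pow_eq_zero h
      exact Or.inr (Or.inr (Or.inl ⟨by rw [hc]; norm_num, rfl⟩))
    · obtain rfl : e = -4 := by linear_combination eq_zero_of_pow_eq_zero h
      exact Or.inr (Or.inr (Or.inr ⟨by rw [hc]; norm_num, rfl⟩))

/-- the set of points of `Z` fixed by the `ℂ^×`-action
(equivalently, with `x1 = x2 = y1 = y2 = a = b = 0`) consists of exactly the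
four points `(0,0,0,0,0,0,468,8)`, `(0,0,0,0,0,0,0,0)`, `(0,0,0,0,0,0,-45,2)`
and `(0,0,0,0,0,0,-18,-4)`. -/
theorem Zset_fixedPoints :
    {p : P8 | p ∈ Zset ∧ ∀ ξ : ℂˣ, cAct ξ p = p} =
      {((0:ℂ), (0:ℂ), (0:ℂ), (0:ℂ), (0:ℂ), (0:ℂ), (468:ℂ), (8:ℂ)),
       ((0:ℂ), (0:ℂ), (0:ℂ), (0:ℂ), (0:ℂ), (0:ℂ), (0:ℂ), (0:ℂ)),
       ((0:ℂ), (0:ℂ), (0:ℂ), (0:ℂ), (0:ℂ), (0:ℂ), (-45:ℂ), (2:ℂ)),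
       ((0:ℂ), (0:ℂ), (0:ℂ), (0:ℂ), (0:ℂ), (0:ℂ), (-18:ℂ), (-4:ℂ))} := by
  ext ⟨x1, x2, y1, y2, a, b, c, e⟩
  simp only [Set.mem_ofPred_eq, Set.mem_insert_iff, Set.mem_singleton_iff, Prod.mk.injEq]
  constructor
  · rintro ⟨hZ, hfix⟩
    have h2 := hfix (Units.mk0 2 two_ne_zero)
    simp only [cAct, Units.val_mk0, Prod.mk.injEq] at h2
    obtain ⟨hx1, hx2, hy1, hy2, ha, hb, -, -⟩ := h2
    obtain rfl : x1 = 0 := by linear_combination hx1 / 15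
    obtain rfl : x2 = 0 := by linear_combination hx2 / 63
    obtain rfl : y1 = 0 := by linear_combination (-16/15) * hy1
    obtain rfl : y2 = 0 := by linear_combination (-64/63) * hy2
    obtain rfl : a = 0 := by linear_combination ha / 3
    obtain rfl : b = 0 := by linear_combination (-4/3) * hb
    obtain ⟨h1, -, -, -, -, -, h7, -, -⟩ := hZ
    have := ce_cases (c := c) (e := e) (by linear_combination h1) (by linear_combination h7)
    simpa using this
  · rintro (h | h | h | h) <;> obtain ⟨rfl, rfl, rfl, rfl, rfl, rfl, rfl, rfl⟩ := h <;>
      refine ⟨?_, fun ξ => by simp [cAct]⟩ <;>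
      norm_num [Zset, CMG4]
end
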